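/- arXiv:2403.00654 — 2 statements merged into one kernel-verified Lean document; each statement's English description precedes it below -/
import Mathlib

section
/- For every subset S of a topological space (X, τ), the δP-interior of S satisfies Pint_δ(S) = S ∩ int(cl_δ(S)), where int denotes topological interior. -/
open Set

variable {X : Type*}

/-- The δ-closure of a set `S`: points `x` such that every open set `A` containing `x`
satisfies `S ∩ interior (closure A) ≠ ∅`. -/
def deltaCl [TopologicalSpace X] (S : Set X) : Set X :=
  {x | ∀ A : Set X, IsOpen A → x ∈ A → (S ∩ interior (closure A)).Nonempty}

/-- The δ-interior of `S` is the complement of the δ-closure of the complement. -/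
def deltaInt [TopologicalSpace X] (S : Set X) : Set X := (deltaCl Sᶜ)ᶜ

/-- `S` is δP-open if `S ⊆ int (cl_δ S)`. -/
def DeltaPOpen [TopologicalSpace X] (S : Set X) : Prop := S ⊆ interior (deltaCl S)

/-- `S` is δP-closed if its complement is δP-open. -/
def DeltaPClosed [TopologicalSpace X] (S : Set X) : Prop := DeltaPOpen Sᶜ

/-- The δP-closure / δP-upper approximation of `S`:
the intersection of all δP-closed sets containing `S`. -/
def PclDelta [TopologicalSpace X] (S : Set X) : Set X := ⋂₀ {W | DeltaPClosed W ∧ S ⊆ W}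

/-- The δP-interior / δP-lower approximation of `S`:
the union of all δP-open sets contained in `S`. -/
def PintDelta [TopologicalSpace X] (S : Set X) : Set X := ⋃₀ {V | DeltaPOpen V ∧ V ⊆ S}

/-- `S` is preopen if `S ⊆ int (cl S)`. -/
def PreOpen [TopologicalSpace X] (S : Set X) : Prop := S ⊆ interior (closure S)

/-- `S` is preclosed if its complement is preopen. -/
def PreClosed [TopologicalSpace X] (S : Set X) : Prop := PreOpen Sᶜ

/-- The P-lower approximation of `S`: the union of all preopen sets contained in `S`. -/
def PLower [TopologicalSpace X] (S : Set X) : Set X := ⋃₀ {V | PreOpen V ∧ V ⊆ S}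

/-- The P-upper approximation of `S`: the intersection of all preclosed sets containing `S`. -/
def PUpper [TopologicalSpace X] (S : Set X) : Set X := ⋂₀ {W | PreClosed W ∧ S ⊆ W}

/-!
The interior `U` of a closed set, such as `cl_δ S`, is regular open. Intersecting with a regular
open set interacts with the δ-closure as intersecting with an open set does with the closure: the
points of `cl_δ S` in `U` remain in `cl_δ (S ∩ U)`. For `U = int (cl_δ S)` this makes `S ∩ U`
δP-open, and it contains every other δP-open subset of `S` because `cl_δ` is monotone.
-/

section

variable [TopologicalSpace X] {S T U : Set X}

theorem deltaCl_mono (h : S ⊆ T) : deltaCl S ⊆ deltaCl T :=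
  fun _ hx A hA hxA => (hx A hA hxA).mono (inter_subset_inter_left _ h)

theorem DeltaPOpen.subset_interior_deltaCl (hS : DeltaPOpen S) (h : S ⊆ T) :
    S ⊆ interior (deltaCl T) :=
  hS.trans (interior_mono (deltaCl_mono h))

theorem isClosed_deltaCl (S : Set X) : IsClosed (deltaCl S) := by
  refine isClosed_of_closure_subset fun x hx A hA hxA => ?_
  obtain ⟨y, hyA, hy⟩ := mem_closure_iff.1 hx A hA hxA
  exact hy A hA hyA

theorem interior_closure_interior_of_isClosed (hS : IsClosed S) :
    interior (closure (interior S)) = interior S := by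
  simpa only [hS.closure_eq] using interior_closure_idem (s := S)

theorem deltaCl_inter_subset_deltaCl_inter_interior_closure (hU : IsOpen U) :
    deltaCl S ∩ U ⊆ deltaCl (S ∩ interior (closure U)) := by
  rintro x ⟨hx, hxU⟩ A hA hxA
  obtain ⟨y, hyS, hy⟩ := hx (A ∩ U) (hA.inter hU) ⟨hxA, hxU⟩
  have hyA : y ∈ interior (closure A) := interior_mono (closure_mono inter_subset_left) hy
  have hyU : y ∈ interior (closure U) := interior_mono (closure_mono inter_subset_right) hy
  exact ⟨y, ⟨hyS, hyU⟩, hyA⟩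

theorem deltaPOpen_inter_interior_deltaCl (S : Set X) :
    DeltaPOpen (S ∩ interior (deltaCl S)) := by
  have h : interior (deltaCl S) ⊆ deltaCl (S ∩ interior (deltaCl S)) := calc
    interior (deltaCl S) ⊆ deltaCl S ∩ interior (deltaCl S) :=
      subset_inter interior_subset Subset.rfl
    _ ⊆ deltaCl (S ∩ interior (closure (interior (deltaCl S)))) :=
      deltaCl_inter_subset_deltaCl_inter_interior_closure isOpen_interior
    _ = deltaCl (S ∩ interior (deltaCl S)) := by
      rw [interior_closure_interior_of_isClosed (isClosed_deltaCl S)]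
  exact inter_subset_right.trans (interior_maximal h isOpen_interior)

end

theorem pintDelta_eq_inter_interior_deltaCl [TopologicalSpace X] (S : Set X) :
    PintDelta S = S ∩ interior (deltaCl S) := by
  apply Subset.antisymm
  · exact sUnion_subset fun V ⟨hV, hVS⟩ => subset_inter hVS (hV.subset_interior_deltaCl hVS)
  · exact subset_sUnion_of_mem ⟨deltaPOpen_inter_interior_deltaCl S, inter_subset_left⟩
end

section
/- For every subset S of a topological space (X, τ), Pcl_δ(Pint_δ(S)) = Pint_δ(S) ∪ cl(int_δ(S)), where cl denotes topological closure. -/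
open Set

variable {X : Type*}

/-!
A point lies in `deltaInt S` exactly when it has an open neighbourhood whose regularization
`interior (closure A)` is contained in `S`. So `deltaInt` is the interior operator of the topology
generated by the regular open sets: it is monotone, idempotent, commutes with binary intersections
and takes open values.

Since a set `W` is δP-closed iff `closure (deltaInt W) ⊆ W`, every δP-closed superset of `T`
contains `T ∪ closure (deltaInt T)`. This union is itself δP-closed because adding the closure of an
open set `U` produces no new δ-interior points outside that closure: `(closure U)ᶜ` is regular open,
so one may intersect with it. Hence `PclDelta T = T ∪ closure (deltaInt T)`. Finally `deltaInt S`,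
being open, is δP-open, so `S` and `PintDelta S` have the same δ-interior.
-/

section DeltaInterior

variable [TopologicalSpace X] {S T U : Set X} {x : X}

theorem mem_deltaInt :
    x ∈ deltaInt S ↔ ∃ A, IsOpen A ∧ x ∈ A ∧ interior (closure A) ⊆ S := by
  simp only [deltaInt, deltaCl, mem_compl_iff, mem_ofPred_eq, not_forall, exists_prop,
    inter_comm Sᶜ, inter_compl_nonempty_iff, not_not]

theorem deltaInt_subset (S : Set X) : deltaInt S ⊆ S := by
  intro x hx
  obtain ⟨A, hA, hxA, hAS⟩ := mem_deltaInt.1 hx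
  exact hAS (hA.subset_interior_closure hxA)

theorem deltaInt_mono (h : S ⊆ T) : deltaInt S ⊆ deltaInt T := by
  intro x hx
  obtain ⟨A, hA, hxA, hAS⟩ := mem_deltaInt.1 hx
  exact mem_deltaInt.2 ⟨A, hA, hxA, hAS.trans h⟩

theorem deltaInt_interior_closure (S : Set X) :
    deltaInt (interior (closure S)) = interior (closure S) :=
  (deltaInt_subset _).antisymm fun _ hx =>
    mem_deltaInt.2 ⟨_, isOpen_interior, hx, interior_closure_idem.subset⟩

theorem interior_closure_subset_deltaInt (h : interior (closure S) ⊆ T) :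
    interior (closure S) ⊆ deltaInt T :=
  (deltaInt_interior_closure S).superset.trans (deltaInt_mono h)

theorem deltaInt_deltaInt (S : Set X) : deltaInt (deltaInt S) = deltaInt S := by
  refine (deltaInt_subset _).antisymm fun x hx => ?_
  obtain ⟨A, hA, hxA, hAS⟩ := mem_deltaInt.1 hx
  exact mem_deltaInt.2 ⟨A, hA, hxA, interior_closure_subset_deltaInt hAS⟩

theorem isOpen_deltaInt (S : Set X) : IsOpen (deltaInt S) := by
  refine isOpen_iff_forall_mem_open.2 fun x hx => ?_
  obtain ⟨A, hA, hxA, hAS⟩ := mem_deltaInt.1 hx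
  exact ⟨A, hA.subset_interior_closure.trans (interior_closure_subset_deltaInt hAS), hA, hxA⟩

theorem deltaInt_inter (S T : Set X) : deltaInt (S ∩ T) = deltaInt S ∩ deltaInt T := by
  refine (subset_inter (deltaInt_mono inter_subset_left)
    (deltaInt_mono inter_subset_right)).antisymm ?_
  rintro x ⟨hxS, hxT⟩
  obtain ⟨A, hA, hxA, hAS⟩ := mem_deltaInt.1 hxS
  obtain ⟨B, hB, hxB, hBT⟩ := mem_deltaInt.1 hxT
  refine mem_deltaInt.2 ⟨A ∩ B, hA.inter hB, ⟨hxA, hxB⟩, subset_inter ?_ ?_⟩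
  · exact (interior_mono (closure_mono inter_subset_left)).trans hAS
  · exact (interior_mono (closure_mono inter_subset_right)).trans hBT

theorem preOpen_of_isOpen (hU : IsOpen U) : PreOpen U :=
  hU.subset_interior_closure

theorem PreOpen.interior_closure_compl_closure (hU : PreOpen U) :
    interior (closure (closure U)ᶜ) = (closure U)ᶜ := by
  rw [closure_compl, interior_compl, compl_inj_iff]
  exact (closure_minimal interior_subset isClosed_closure).antisymm (closure_mono hU)

theorem PreOpen.deltaInt_compl_closure (hU : PreOpen U) :
    deltaInt (closure U)ᶜ = (closure U)ᶜ := by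
  rw [← hU.interior_closure_compl_closure, deltaInt_interior_closure]

theorem PreOpen.deltaInt_union_closure_subset (hU : PreOpen U) (T : Set X) :
    deltaInt (T ∪ closure U) ⊆ deltaInt T ∪ closure U := by
  rw [union_comm (deltaInt T), ← sdiff_subset_iff, sdiff_eq]
  calc deltaInt (T ∪ closure U) ∩ (closure U)ᶜ
      = deltaInt ((T ∪ closure U) ∩ (closure U)ᶜ) := by
        rw [deltaInt_inter, hU.deltaInt_compl_closure]
    _ ⊆ deltaInt T := deltaInt_mono (by rw [← sdiff_eq, sdiff_subset_iff, union_comm])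

end DeltaInterior

section DeltaPreopen

variable [TopologicalSpace X] {S U W : Set X}

theorem closure_subset_deltaCl (S : Set X) : closure S ⊆ deltaCl S := by
  intro x hx A hA hxA
  exact (mem_closure_iff.1 hx A hA hxA).mono fun y hy => ⟨hy.2, hA.subset_interior_closure hy.1⟩

theorem PreOpen.deltaPOpen (hU : PreOpen U) : DeltaPOpen U :=
  hU.trans (interior_mono (closure_subset_deltaCl U))

theorem deltaPClosed_iff : DeltaPClosed W ↔ closure (deltaInt W) ⊆ W := by
  rw [DeltaPClosed, DeltaPOpen, deltaInt, closure_compl, compl_subset_comm]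

theorem deltaPClosed_union_closure_deltaInt (S : Set X) :
    DeltaPClosed (S ∪ closure (deltaInt S)) := by
  have hU : PreOpen (deltaInt S) := preOpen_of_isOpen (isOpen_deltaInt S)
  have hInt : deltaInt (S ∪ closure (deltaInt S)) ⊆ closure (deltaInt S) :=
    (hU.deltaInt_union_closure_subset S).trans (union_subset subset_closure Subset.rfl)
  exact deltaPClosed_iff.2 ((closure_minimal hInt isClosed_closure).trans subset_union_right)

theorem pclDelta_eq_union_closure_deltaInt (S : Set X) :
    PclDelta S = S ∪ closure (deltaInt S) := by
  apply Subset.antisymm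
  · exact sInter_subset_of_mem ⟨deltaPClosed_union_closure_deltaInt S, subset_union_left⟩
  · rintro x hx W ⟨hW, hSW⟩
    exact union_subset hSW ((closure_mono (deltaInt_mono hSW)).trans (deltaPClosed_iff.1 hW)) hx

theorem pintDelta_subset (S : Set X) : PintDelta S ⊆ S :=
  sUnion_subset fun _ hV => hV.2

theorem deltaInt_subset_pintDelta (S : Set X) : deltaInt S ⊆ PintDelta S :=
  subset_sUnion_of_mem ⟨(preOpen_of_isOpen (isOpen_deltaInt S)).deltaPOpen, deltaInt_subset S⟩

theorem deltaInt_pintDelta (S : Set X) : deltaInt (PintDelta S) = deltaInt S := by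
  refine (deltaInt_mono (pintDelta_subset S)).antisymm ?_
  rw [← deltaInt_deltaInt S]
  exact deltaInt_mono (deltaInt_subset_pintDelta S)

end DeltaPreopen

theorem pclDelta_pintDelta [TopologicalSpace X] (S : Set X) :
    PclDelta (PintDelta S) = PintDelta S ∪ closure (deltaInt S) := by
  rw [pclDelta_eq_union_closure_deltaInt, deltaInt_pintDelta]
end
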